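/- arXiv:1810.11555 — 3 statements merged into one kernel-verified Lean document; each statement's English description precedes it below -/
import Mathlib

section
/- Let B be a finite-dimensional ℂ-algebra with a Frobenius system (E, (bᵢ)ᵢ∈I, (bᵢ^∨)ᵢ∈I) for B over ℂ such that E is symmetric, and let C = ∑ᵢ bᵢ^∨ * bᵢ. Then for every a ∈ B, the trace of the ℂ-linear endomorphism of B given by left multiplication by a equals E(C * a). -/
/-!
The dual-basis identity `x = ∑ i, E (b i * x) • bv i` writes every endomorphism `f` of `B` as a sum
of the rank-one maps `x ↦ E (b i * f x) • bv i`, so its trace is `∑ i, E (b i * f (bv i))`. For `f`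
the left multiplication by `a`, symmetry of `E` moves `bv i` cyclically to the front of
`E (b i * a * bv i)`, and the Casimir element appears.
-/

section DualSystem

variable {R M I : Type*} [Fintype I]

section Semiring

variable [Semiring R] [AddCommMonoid M] [Module R M]

theorem module_finite_of_forall_eq_sum_smul {φ : I → M → R} {v : I → M}
    (h : ∀ x, x = ∑ i, φ i x • v i) : Module.Finite R M := by
  refine .of_surjective (Fintype.linearCombination R v) fun x ↦ ⟨fun i ↦ φ i x, ?_⟩
  rw [Fintype.linearCombination_apply, ← h x]

theorem eq_sum_smulRight_of_forall_eq_sum_smul {N : Type*} [AddCommMonoid N] [Module R N]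
    {φ : I → M →ₗ[R] R} {v : I → M} (h : ∀ x, x = ∑ i, φ i x • v i) (f : N →ₗ[R] M) :
    f = ∑ i, (φ i ∘ₗ f).smulRight (v i) := by
  ext x
  simpa using h (f x)

end Semiring

theorem trace_eq_sum_of_forall_eq_sum_smul [CommRing R] [AddCommGroup M] [Module R M]
    [Module.Free R M] {φ : I → M →ₗ[R] R} {v : I → M} (h : ∀ x, x = ∑ i, φ i x • v i)
    (f : M →ₗ[R] M) : LinearMap.trace R M f = ∑ i, φ i (f (v i)) := by
  have : Module.Finite R M := module_finite_of_forall_eq_sum_smul h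
  calc LinearMap.trace R M f
      = LinearMap.trace R M (∑ i, (φ i ∘ₗ f).smulRight (v i)) :=
        congrArg _ (eq_sum_smulRight_of_forall_eq_sum_smul h f)
    _ = ∑ i, φ i (f (v i)) := by
        simp only [map_sum, LinearMap.trace_smulRight, LinearMap.comp_apply]

end DualSystem

section Frobenius

variable {R B I : Type*} [Fintype I]

theorem map_casimir_mul {M F : Type*} [NonUnitalSemiring B] [AddCommMonoid M] [FunLike F B M]
    [AddMonoidHomClass F B M] (E : F) (b bv : I → B)
    (hsymm : ∀ x y : B, E (x * y) = E (y * x)) (a : B) :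
    E ((∑ i, bv i * b i) * a) = ∑ i, E (b i * (a * bv i)) := by
  simp only [Finset.sum_mul, map_sum, mul_assoc, hsymm (bv _)]

variable [CommRing R]

theorem trace_eq_sum_map_mul_apply [NonUnitalNonAssocRing B] [Module R B] [SMulCommClass R B B]
    [Module.Free R B] (E : B →ₗ[R] R) (b bv : I → B)
    (hdual : ∀ x : B, x = ∑ i, E (b i * x) • bv i) (f : B →ₗ[R] B) :
    LinearMap.trace R B f = ∑ i, E (b i * f (bv i)) :=
  trace_eq_sum_of_forall_eq_sum_smul (φ := fun i ↦ E ∘ₗ LinearMap.mulLeft R (b i)) hdual f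

theorem trace_left_mul_eq_E_casimir_mul_general [NonUnitalRing B] [Module R B]
    [SMulCommClass R B B] [Module.Free R B] (E : B →ₗ[R] R) (b bv : I → B)
    (hdual : ∀ x : B, x = ∑ i, E (b i * x) • bv i)
    (hsymm : ∀ x y : B, E (x * y) = E (y * x)) (a : B) :
    LinearMap.trace R B (LinearMap.mulLeft R a) = E ((∑ i, bv i * b i) * a) := by
  rw [trace_eq_sum_map_mul_apply E b bv hdual, map_casimir_mul E b bv hsymm]
  simp only [LinearMap.mulLeft_apply]

end Frobenius

/-- For a symmetric Frobenius algebra `B` over `ℂ` with Frobenius system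
`(E, (bᵢ), (bᵢ^∨))` and Casimir element `C = ∑ᵢ bᵢ^∨ * bᵢ`, the trace of left
multiplication by `a` on `B` equals `E(C * a)`. -/
theorem trace_left_mul_eq_E_casimir_mul
    {B : Type*} [Ring B] [Algebra ℂ B] [FiniteDimensional ℂ B]
    {I : Type*} [Fintype I]
    (E : B →ₗ[ℂ] ℂ) (b bv : I → B)
    (hdual₁ : ∀ x : B, x = ∑ i, E (x * bv i) • b i)
    (hdual₂ : ∀ x : B, x = ∑ i, E (b i * x) • bv i)
    (hsymm : ∀ x y : B, E (x * y) = E (y * x)) :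
    ∀ a : B, LinearMap.trace ℂ B (LinearMap.mulLeft ℂ a) = E ((∑ i, bv i * b i) * a) :=
  trace_left_mul_eq_E_casimir_mul_general E b bv hdual₂ hsymm
end

section
/- Let B be a finite-dimensional ℂ-algebra with a Frobenius system (E, (bᵢ)ᵢ∈I, (bᵢ^∨)ᵢ∈I) for B over ℂ such that E is symmetric, let C = ∑ᵢ bᵢ^∨ * bᵢ, and let e ∈ B be a central idempotent (e*e = e and e*x = x*e for all x ∈ B). Then for every a ∈ B, left multiplication by a maps the left ideal B*e = {x*e | x ∈ B} into itself, and the trace of the induced ℂ-linear endomorphism of B*e equals E(C * e * a). -/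
/-! A Frobenius system exhibits `E (bᵢ * ·)` and `bᵢ^∨` as dual families of `B`. Since right
multiplication by an idempotent `e` fixes `B*e` pointwise, the restrictions of `E (bᵢ * ·)` to `B*e`
and the elements `bᵢ^∨ * e` are dual families of `B*e`, so left multiplication by `a` has trace
`∑ᵢ E (bᵢ * (a * (bᵢ^∨ * e)))` there. Symmetry of `E` and centrality of `e` turn this sum into
`E (C * e * a)`. -/

theorem trace_eq_sum_of_eq_sum_smul {R M ι : Type*} [CommRing R] [AddCommGroup M] [Module R M]
    [Module.Free R M] [Fintype ι] {φ : ι → Module.Dual R M} {v : ι → M}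
    (hdual : ∀ x, x = ∑ i, φ i x • v i) (f : M →ₗ[R] M) :
    LinearMap.trace R M f = ∑ i, φ i (f (v i)) := by
  have : Module.Finite R M :=
    .of_surjective (Fintype.linearCombination R v) fun x ↦ ⟨fun i ↦ φ i x, (hdual x).symm⟩
  have hf : f = ∑ i, (φ i ∘ₗ f).smulRight (v i) := by
    ext x
    simpa using hdual (f x)
  conv_lhs => rw [hf]
  simp only [map_sum, LinearMap.trace_smulRight, LinearMap.comp_apply]

section RangeMulRight

variable {R B : Type*}

theorem mul_mem_range_mulRight [Semiring R] [NonUnitalSemiring B] [Module R B]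
    [IsScalarTower R B B] {e x : B} (a : B) (hx : x ∈ LinearMap.range (LinearMap.mulRight R e)) :
    a * x ∈ LinearMap.range (LinearMap.mulRight R e) := by
  obtain ⟨y, rfl⟩ := hx
  exact ⟨a * y, mul_assoc a y e⟩

theorem mul_eq_self_of_mem_range_mulRight [Semiring R] [NonUnitalSemiring B] [Module R B]
    [IsScalarTower R B B] {e x : B} (he : IsIdempotentElem e)
    (hx : x ∈ LinearMap.range (LinearMap.mulRight R e)) : x * e = x := by
  obtain ⟨y, rfl⟩ := hx
  rw [LinearMap.mulRight_apply, mul_assoc, he.eq]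

theorem trace_mulLeft_restrict_range_mulRight {I : Type*} [CommRing R] [Ring B] [Algebra R B]
    [Fintype I] {E : B →ₗ[R] R} {b bv : I → B} (hdual : ∀ x, x = ∑ i, E (b i * x) • bv i)
    {e : B} (he : IsIdempotentElem e) [Module.Free R (LinearMap.range (LinearMap.mulRight R e))]
    {a : B} (h : ∀ x ∈ LinearMap.range (LinearMap.mulRight R e),
      LinearMap.mulLeft R a x ∈ LinearMap.range (LinearMap.mulRight R e)) :
    LinearMap.trace R _ ((LinearMap.mulLeft R a).restrict h) =
      ∑ i, E (b i * (a * (bv i * e))) := by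
  let φ (i : I) : Module.Dual R (LinearMap.range (LinearMap.mulRight R e)) :=
    (E ∘ₗ LinearMap.mulLeft R (b i)).domRestrict _
  let v (i : I) : LinearMap.range (LinearMap.mulRight R e) := ⟨bv i * e, bv i, rfl⟩
  have hφv (x : LinearMap.range (LinearMap.mulRight R e)) : x = ∑ i, φ i x • v i := by
    apply Subtype.ext
    calc (x : B) = x * e := (mul_eq_self_of_mem_range_mulRight he x.2).symm
      _ = (∑ i, E (b i * x) • bv i) * e := by rw [← hdual]
      _ = ↑(∑ i, φ i x • v i) := by simp [φ, v, Finset.sum_mul]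
  exact trace_eq_sum_of_eq_sum_smul hφv _

end RangeMulRight

theorem sum_map_mul_mul_eq_map_sum_mul_of_central {B M F I : Type*} [NonUnitalSemiring B]
    [AddCommMonoid M] [FunLike F B M] [AddMonoidHomClass F B M] [Fintype I] {E : F}
    (hsymm : ∀ x y, E (x * y) = E (y * x)) (b bv : I → B) {e : B} (hec : ∀ x, e * x = x * e)
    (a : B) :
    ∑ i, E (b i * (a * (bv i * e))) = E ((∑ i, bv i * b i) * e * a) := by
  simp only [Finset.sum_mul, map_sum]
  refine Finset.sum_congr rfl fun i _ ↦ ?_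
  calc E (b i * (a * (bv i * e))) = E (b i * a * (bv i * e)) := by rw [mul_assoc]
    _ = E (bv i * e * (b i * a)) := hsymm _ _
    _ = E (bv i * (e * b i) * a) := by simp only [mul_assoc]
    _ = E (bv i * b i * e * a) := by rw [hec, ← mul_assoc (bv i)]

theorem trace_on_ideal_eq_E_casimir_idempotent_general
    {R B I : Type*} [CommRing R] [Ring B] [Algebra R B] [Fintype I]
    (E : B →ₗ[R] R) (b bv : I → B)
    (hdual : ∀ x : B, x = ∑ i, E (b i * x) • bv i)
    (hsymm : ∀ x y : B, E (x * y) = E (y * x))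
    (e : B) (he : e * e = e) (hec : ∀ x : B, e * x = x * e)
    [Module.Free R (LinearMap.range (LinearMap.mulRight R e))] (a : B) :
    (∀ x ∈ LinearMap.range (LinearMap.mulRight R e),
        a * x ∈ LinearMap.range (LinearMap.mulRight R e)) ∧
    ∀ (h : ∀ x ∈ LinearMap.range (LinearMap.mulRight R e),
        LinearMap.mulLeft R a x ∈ LinearMap.range (LinearMap.mulRight R e)),
      LinearMap.trace R (LinearMap.range (LinearMap.mulRight R e))
          ((LinearMap.mulLeft R a).restrict h) =
        E ((∑ i, bv i * b i) * e * a) :=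
  ⟨fun _ ↦ mul_mem_range_mulRight a, fun h ↦
    (trace_mulLeft_restrict_range_mulRight hdual he h).trans
      (sum_map_mul_mul_eq_map_sum_mul_of_central hsymm b bv hec a)⟩

/-- For a symmetric Frobenius algebra `B` over `ℂ` with Frobenius system
`(E, (bᵢ), (bᵢ^∨))`, Casimir element `C = ∑ᵢ bᵢ^∨ * bᵢ`, and a central
idempotent `e`, left multiplication by any `a ∈ B` preserves the left ideal
`B*e = range (· * e)`, and the trace of the induced endomorphism of `B*e`
equals `E(C * e * a)`. -/
theorem trace_on_ideal_eq_E_casimir_idempotent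
    {B : Type*} [Ring B] [Algebra ℂ B] [FiniteDimensional ℂ B]
    {I : Type*} [Fintype I]
    (E : B →ₗ[ℂ] ℂ) (b bv : I → B)
    (hdual₁ : ∀ x : B, x = ∑ i, E (x * bv i) • b i)
    (hdual₂ : ∀ x : B, x = ∑ i, E (b i * x) • bv i)
    (hsymm : ∀ x y : B, E (x * y) = E (y * x))
    (e : B) (he : e * e = e) (hec : ∀ x : B, e * x = x * e) (a : B) :
    (∀ x ∈ LinearMap.range (LinearMap.mulRight ℂ e),
        a * x ∈ LinearMap.range (LinearMap.mulRight ℂ e)) ∧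
    ∀ (h : ∀ x ∈ LinearMap.range (LinearMap.mulRight ℂ e),
        LinearMap.mulLeft ℂ a x ∈ LinearMap.range (LinearMap.mulRight ℂ e)),
      LinearMap.trace ℂ (LinearMap.range (LinearMap.mulRight ℂ e))
          ((LinearMap.mulLeft ℂ a).restrict h) =
        E ((∑ i, bv i * b i) * e * a) :=
  trace_on_ideal_eq_E_casimir_idempotent_general E b bv hdual₂ hsymm e he hec a
end

section
/- Let B be a finite-dimensional ℂ-algebra, A a subalgebra of B, (E, (bᵢ)ᵢ∈I, (bᵢ^∨)ᵢ∈I) a Frobenius system for B over A, and (E₀, (aⱼ)ⱼ∈J, (aⱼ^∨)ⱼ∈J) a Frobenius system for A over ℂ. Assume that E₀ is symmetric on A (E₀(u*v) = E₀(v*u) for all u, v ∈ A) and that the composite E₀ ∘ E is symmetric on B (E₀(E(x*y)) = E₀(E(y*x)) for all x, y ∈ B). Let Cᶦ = ∑ᵢ bᵢ * bᵢ^∨. Then for every x ∈ B satisfying x*a = a*x for all a ∈ A, the trace of the ℂ-linear endomorphism of B given by left multiplication by x equals the trace of the ℂ-linear endomorphism of A given by left multiplication by E(Cᶦ * x). 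-/
/-!
Since `x` centralizes `A`, left multiplication by `x` is an endomorphism of the left `A`-module `B`,
which `(bᵢ)` and the coordinates `E (· * bᵢ^∨)` exhibit as a direct summand of a free module of
finite rank. Moving the trace to `A` yields right multiplication by the Hattori–Stallings trace
`E (x * Cᶦ)`. On `A`, left and right multiplication by `c` both have trace
`∑ⱼ E₀ (aⱼ * c * aⱼ^∨)`, and symmetry of `E₀ ∘ E` together with nondegeneracy of `E₀` gives
`E (x * Cᶦ) = E (Cᶦ * x)`.
-/

section Frobenius

variable {R A B : Type*} [CommRing R] [Ring A] [Algebra R A] [Ring B] [Algebra R B]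
  {I J : Type*} [Fintype I] [Fintype J]

theorem trace_mulLeft_eq_trace_mulRight_of_dual_bases [Module.Free R A] [Module.Finite R A]
    (E₀ : A →ₗ[R] R) (a a' : J → A)
    (hright : ∀ u : A, u = ∑ j, E₀ (u * a' j) • a j)
    (hleft : ∀ u : A, u = ∑ j, E₀ (a j * u) • a' j) (c : A) :
    LinearMap.trace R A (LinearMap.mulLeft R c) = LinearMap.trace R A (LinearMap.mulRight R c) := by
  have mulLeft_eq : LinearMap.mulLeft R c =
      ∑ j, (E₀ ∘ₗ LinearMap.mulLeft R (a j * c)).smulRight (a' j) := by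
    ext u
    simpa [mul_assoc] using hleft (c * u)
  have mulRight_eq : LinearMap.mulRight R c =
      ∑ j, (E₀ ∘ₗ LinearMap.mulRight R (c * a' j)).smulRight (a j) := by
    ext u
    simpa [mul_assoc] using hright (u * c)
  rw [mulLeft_eq, mulRight_eq]
  simp [mul_assoc]

theorem trace_mulLeft_eq_trace_mulRight_of_centralizes
    [Module.Free R A] [Module.Finite R A] [Module.Free R B] [Module.Finite R B]
    (ι : A →ₐ[R] B) (E : B →ₗ[R] A) (b b' : I → B)
    (hEl : ∀ (a : A) (y : B), E (ι a * y) = a * E y)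
    (hdual : ∀ y : B, y = ∑ i, ι (E (y * b' i)) * b i)
    (x : B) (hx : ∀ a : A, x * ι a = ι a * x) :
    LinearMap.trace R B (LinearMap.mulLeft R x) =
      LinearMap.trace R A (LinearMap.mulRight R (E (x * ∑ i, b i * b' i))) := by
  let coord (i : I) : B →ₗ[R] A := E ∘ₗ LinearMap.mulRight R (b' i)
  let incl (i : I) : A →ₗ[R] B := LinearMap.mulRight R (b i) ∘ₗ ι.toLinearMap
  have mulLeft_eq : LinearMap.mulLeft R x =
      ∑ i, (LinearMap.mulLeft R x ∘ₗ incl i) ∘ₗ coord i := by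
    ext y
    simpa [coord, incl, Finset.mul_sum] using congrArg (x * ·) (hdual y)
  have coord_comp_incl (i : I) : coord i ∘ₗ LinearMap.mulLeft R x ∘ₗ incl i =
      LinearMap.mulRight R (E (x * (b i * b' i))) := by
    ext u
    calc E (x * (ι u * b i) * b' i)
        = E (x * ι u * (b i * b' i)) := by simp only [mul_assoc]
      _ = u * E (x * (b i * b' i)) := by rw [hx, mul_assoc, hEl]
  calc LinearMap.trace R B (LinearMap.mulLeft R x)
      = ∑ i, LinearMap.trace R A (coord i ∘ₗ LinearMap.mulLeft R x ∘ₗ incl i) := by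
        conv_lhs => rw [mulLeft_eq, map_sum]
        simp only [LinearMap.trace_comp_comm' (coord _)]
    _ = LinearMap.trace R A (∑ i, LinearMap.mulRight R (E (x * (b i * b' i)))) := by
        simp only [coord_comp_incl, map_sum]
    _ = LinearMap.trace R A (LinearMap.mulRight R (E (x * ∑ i, b i * b' i))) := by
        congr 1
        ext u
        simp [Finset.mul_sum]

theorem map_mul_comm_of_centralizes (ι : A →ₐ[R] B) (E : B →ₗ[R] A)
    (hEr : ∀ (a : A) (y : B), E (y * ι a) = E y * a)
    (E₀ : A →ₗ[R] R) (hE₀ : ∀ u v : A, (∀ a, E₀ (u * a) = E₀ (v * a)) → u = v)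
    (x : B) (hsymm : ∀ y : B, E₀ (E (x * y)) = E₀ (E (y * x)))
    (hx : ∀ a : A, x * ι a = ι a * x) (y : B) :
    E (x * y) = E (y * x) := by
  refine hE₀ _ _ fun a => ?_
  calc E₀ (E (x * y) * a)
      = E₀ (E (x * (y * ι a))) := by rw [← hEr, mul_assoc]
    _ = E₀ (E (y * ι a * x)) := hsymm _
    _ = E₀ (E (y * x * ι a)) := by rw [mul_assoc, ← hx, ← mul_assoc]
    _ = E₀ (E (y * x) * a) := by rw [hEr]

theorem trace_centralizer_eq_trace_E_iota_casimir_general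
    [Module.Free R A] [Module.Finite R A] [Module.Free R B] [Module.Finite R B]
    (ι : A →ₐ[R] B) (E : B →ₗ[R] A) (b b' : I → B)
    (hEl : ∀ (a : A) (y : B), E (ι a * y) = a * E y)
    (hEr : ∀ (a : A) (y : B), E (y * ι a) = E y * a)
    (hdual : ∀ y : B, y = ∑ i, ι (E (y * b' i)) * b i)
    (E₀ : A →ₗ[R] R) (a a' : J → A)
    (hright : ∀ u : A, u = ∑ j, E₀ (u * a' j) • a j)
    (hleft : ∀ u : A, u = ∑ j, E₀ (a j * u) • a' j)
    (x : B) (hsymm : ∀ y : B, E₀ (E (x * y)) = E₀ (E (y * x)))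
    (hx : ∀ a : A, x * ι a = ι a * x) :
    LinearMap.trace R B (LinearMap.mulLeft R x) =
      LinearMap.trace R A (LinearMap.mulLeft R (E ((∑ i, b i * b' i) * x))) := by
  have nondegenerate (u v : A) (h : ∀ c, E₀ (u * c) = E₀ (v * c)) : u = v := by
    rw [hright u, hright v]
    simp only [h]
  rw [trace_mulLeft_eq_trace_mulRight_of_centralizes ι E b b' hEl hdual x hx,
    map_mul_comm_of_centralizes ι E hEr E₀ nondegenerate x hsymm hx,
    trace_mulLeft_eq_trace_mulRight_of_dual_bases E₀ a a' hright hleft]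

end Frobenius

/-- Let `B` be a finite-dimensional `ℂ`-algebra, `A ⊆ B` a subalgebra with a
Frobenius system `(E, (bᵢ), (bᵢ^∨))` for `B` over `A`, and `(E₀, (aⱼ), (aⱼ^∨))`
a Frobenius system for `A` over `ℂ`, with `E₀` symmetric on `A` and `E₀ ∘ E`
symmetric on `B`. Let `Cᶦ = ∑ᵢ bᵢ * bᵢ^∨`. Then for any `x` in the centralizer
`Z(B,A)`, the trace of left multiplication by `x` on `B` equals the trace of
left multiplication by `E(Cᶦ * x)` on `A`. -/
theorem trace_centralizer_eq_trace_E_iota_casimir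
    {B : Type*} [Ring B] [Algebra ℂ B] [FiniteDimensional ℂ B]
    (A : Subalgebra ℂ B)
    {I J : Type*} [Fintype I] [Fintype J]
    (E : B →ₗ[ℂ] A) (b bv : I → B)
    (hEl : ∀ (a : A) (x : B), E ((a : B) * x) = a * E x)
    (hEr : ∀ (a : A) (x : B), E (x * (a : B)) = E x * a)
    (hdual₁ : ∀ x : B, x = ∑ i, (E (x * bv i) : B) * b i)
    (hdual₂ : ∀ x : B, x = ∑ i, bv i * (E (b i * x) : B))
    (E₀ : A →ₗ[ℂ] ℂ) (av avv : J → A)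
    (hdual₁' : ∀ u : A, u = ∑ j, E₀ (u * avv j) • av j)
    (hdual₂' : ∀ u : A, u = ∑ j, E₀ (av j * u) • avv j)
    (hsymm₀ : ∀ u v : A, E₀ (u * v) = E₀ (v * u))
    (hsymm : ∀ x y : B, E₀ (E (x * y)) = E₀ (E (y * x)))
    (x : B) (hx : ∀ c : A, x * (c : B) = (c : B) * x) :
    LinearMap.trace ℂ B (LinearMap.mulLeft ℂ x) =
      LinearMap.trace ℂ A (LinearMap.mulLeft ℂ (E ((∑ i, b i * bv i) * x))) :=
  trace_centralizer_eq_trace_E_iota_casimir_general A.val E b bv hEl hEr hdual₁ E₀ av avv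
    hdual₁' hdual₂' x (hsymm x) hx
end
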